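/- For a real random variable Y with E[Y] = 0 and E[Y²] = 1 and finite j-th moment (j ≥ 3), the expectation of the j-th Hermite polynomial satisfies E[H_j(Y)] = Σ_{k=1}^{⌊j/3⌋} Σ_{r_1+...+r_k = j, each r_i ≥ 3} (κ_{r_1}···κ_{r_k})/(r_1!···r_k!) · j!/k!, where κ_r denotes the r-th cumulant of Y. In particular E[H_0(Y)] = 1 and E[H_1(Y)] = E[H_2(Y)] = 0. -/

import Mathlib

open MeasureTheory ProbabilityTheory Complex Finset

namespace HermiteAux

open PowerSeries in
/-- Uniqueness for the truncated formal ODE `A' = B A`. -/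
lemma ode_unique {j : ℕ} (D B : PowerSeries ℝ) (h : (X : PowerSeries ℝ) ^ j ∣ derivative ℝ D - B * D)
    (h0 : coeff 0 D = 0) : (X : PowerSeries ℝ) ^ (j + 1) ∣ D := by
  have key : ∀ m, m ≤ j + 1 → (X : PowerSeries ℝ) ^ m ∣ D := by
    intro m
    induction m with
    | zero => intro _; simp
    | succ m ih =>
      intro hm
      have h1 := ih (by omega)
      have h2 : (X : PowerSeries ℝ) ^ m ∣ derivative ℝ D := by
        have h3 := (pow_dvd_pow (X : PowerSeries ℝ) (show m ≤ j by omega)).trans h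
        have h4 := dvd_add h3 (Dvd.dvd.mul_left h1 B)
        simpa using h4
      rw [X_pow_dvd_iff] at h2 ⊢
      intro n hn
      cases n with
      | zero => exact h0
      | succ n =>
        have h5 := h2 n (by omega)
        rw [coeff_derivative] at h5
        have : ((n : ℝ) + 1) ≠ 0 := by positivity
        exact (mul_eq_zero.mp h5).resolve_right this
  exact key _ le_rfl

/-- exponential generating function -/
noncomputable def egf (a : ℕ → ℝ) : PowerSeries ℝ := PowerSeries.mk fun n => a n / (n.factorial : ℝ)

lemma coeff_egf (a : ℕ → ℝ) (n : ℕ) : PowerSeries.coeff n (egf a) = a n / (n.factorial : ℝ) := by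
  simp [egf]

open PowerSeries in
lemma egf_derivative (a : ℕ → ℝ) : derivative ℝ (egf a) = egf (fun n => a (n + 1)) := by
  ext n
  rw [coeff_derivative, coeff_egf, coeff_egf, Nat.factorial_succ]
  have : (n.factorial : ℝ) ≠ 0 := by positivity
  push_cast
  field_simp

lemma coeff_egf_mul (a b : ℕ → ℝ) (n : ℕ) : PowerSeries.coeff n (egf a * egf b) =
    (∑ i ∈ Finset.range (n + 1), (n.choose i : ℝ) * a i * b (n - i)) / (n.factorial : ℝ) := by
  rw [PowerSeries.coeff_mul, Finset.Nat.sum_antidiagonal_eq_sum_range_succ_mk, Finset.sum_div]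
  refine Finset.sum_congr rfl fun i hi => ?_
  have hi' : i ≤ n := by simpa [Nat.lt_succ_iff] using hi
  rw [coeff_egf, coeff_egf, Nat.cast_choose ℝ hi']
  have h1 : (n.factorial : ℝ) ≠ 0 := by positivity
  have h2 : (i.factorial : ℝ) ≠ 0 := by positivity
  have h3 : ((n - i).factorial : ℝ) ≠ 0 := by positivity
  field_simp

open PowerSeries in
lemma egf_ode {j : ℕ} (a b : ℕ → ℝ)
    (h : ∀ n < j, a (n + 1) = ∑ i ∈ Finset.range (n + 1), (n.choose i : ℝ) * b i * a (n - i)) :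
    (X : PowerSeries ℝ) ^ j ∣ derivative ℝ (egf a) - egf b * egf a := by
  rw [X_pow_dvd_iff]
  intro n hn
  rw [map_sub, coeff_egf_mul, ← h n hn, egf_derivative, coeff_egf, sub_self]

lemma logderiv {𝕜 : Type*} [RCLike 𝕜] (F B : ℝ → 𝕜) (n : ℕ) (h : deriv F =ᶠ[nhds 0] B * F)
    (hF : ContDiffAt ℝ n F 0) (hB : ContDiffAt ℝ n B 0) :
    iteratedDeriv (n + 1) F 0 = ∑ i ∈ Finset.range (n + 1),
      (n.choose i : 𝕜) * iteratedDeriv i B 0 * iteratedDeriv (n - i) F 0 := by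
  rw [iteratedDeriv_succ', h.iteratedDeriv_eq n, iteratedDeriv_mul hB hF]

lemma H_eq (H : ℕ → ℝ → ℝ)
    (hgen : ∀ t x : ℝ, HasSum (fun n : ℕ => H n x * t ^ n / (Nat.factorial n))
      (Real.exp (t * x - t ^ 2 / 2)))
    (n : ℕ) (x : ℝ) : H n x = iteratedDeriv n (fun t => Real.exp (t * x - t ^ 2 / 2)) 0 := by
  have hA : AnalyticAt ℝ (fun t => Real.exp (t * x - t ^ 2 / 2)) 0 := by fun_prop
  have h1 := hA.hasFPowerSeriesAt
  have h2 : HasFPowerSeriesAt (fun t => Real.exp (t * x - t ^ 2 / 2))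
      (FormalMultilinearSeries.ofScalars ℝ (fun n => H n x / (n.factorial : ℝ))) 0 := by
    rw [hasFPowerSeriesAt_iff]
    refine Filter.Eventually.of_forall fun t => ?_
    have := hgen t x
    simp only [FormalMultilinearSeries.coeff_ofScalars, smul_eq_mul, zero_add]
    have e : (fun m : ℕ => t ^ m * (H m x / (m.factorial : ℝ))) =
        fun m : ℕ => H m x * t ^ m / (m.factorial : ℝ) := by
      funext m; ring
    rw [e]; exact this
  have h3 := congrArg (fun p => FormalMultilinearSeries.coeff p n) (h1.eq_formalMultilinearSeries h2)
  simp only [FormalMultilinearSeries.coeff_ofScalars] at h3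
  have : (n.factorial : ℝ) ≠ 0 := by positivity
  exact ((div_left_inj' this).mp h3).symm

open PowerSeries in
lemma H_ode (H : ℕ → ℝ → ℝ)
    (hgen : ∀ t x : ℝ, HasSum (fun n : ℕ => H n x * t ^ n / (Nat.factorial n))
      (Real.exp (t * x - t ^ 2 / 2)))
    (x : ℝ) : derivative ℝ (egf fun n => H n x) = (C x - X) * egf fun n => H n x := by
  have hb : (C x - X : PowerSeries ℝ) = egf (fun i => iteratedDeriv i (fun t : ℝ => x - t) 0) := by
    ext n
    rw [coeff_egf]
    rcases n with _ | _ | n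
    · simp
    · simp [coeff_X, coeff_C, deriv_const_sub]
    · have : deriv (fun t : ℝ => x - t) = fun _ => -1 := by
        ext t; simp [deriv_const_sub]
      rw [iteratedDeriv_succ', this, iteratedDeriv_const]
      simp [coeff_X, coeff_C]
  rw [hb, ← sub_eq_zero]
  ext n
  have := egf_ode (j := n + 1) (fun n => H n x) (fun i => iteratedDeriv i (fun t : ℝ => x - t) 0) ?_
  · rw [X_pow_dvd_iff] at this
    simpa using this n (by omega)
  · intro m _
    simp only [H_eq H hgen]
    refine logderiv _ _ m (Filter.Eventually.of_forall fun t => ?_) (by fun_prop) (by fun_prop)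
    have h1 : HasDerivAt (fun t : ℝ => t * x - t ^ 2 / 2) (x - t) t := by
      have := ((hasDerivAt_id t).mul_const x).sub (((hasDerivAt_id t).pow 2).div_const 2)
      refine this.congr_deriv ?_
      simp
    rw [h1.exp.deriv]
    simp [mul_comm]

lemma H_zero (H : ℕ → ℝ → ℝ)
    (hgen : ∀ t x : ℝ, HasSum (fun n : ℕ => H n x * t ^ n / (Nat.factorial n))
      (Real.exp (t * x - t ^ 2 / 2)))
    (x : ℝ) : H 0 x = 1 := by
  rw [H_eq H hgen]; simp

open PowerSeries in
lemma H_mul (H : ℕ → ℝ → ℝ)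
    (hgen : ∀ t x : ℝ, HasSum (fun n : ℕ => H n x * t ^ n / (Nat.factorial n))
      (Real.exp (t * x - t ^ 2 / 2)))
    (x : ℝ) : (egf fun n => H n x) = egf (fun n => x ^ n) * egf (fun n => H n 0) := by
  rw [← sub_eq_zero]
  ext n
  have hx : derivative ℝ (egf fun n => x ^ n) = C x * egf fun n => x ^ n := by
    rw [egf_derivative]
    ext n
    rw [coeff_C_mul, coeff_egf, coeff_egf, pow_succ]
    ring
  have := ode_unique (j := n) ((egf fun n => H n x) - egf (fun n => x ^ n) * egf (fun n => H n 0))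
    (C x - X) ?_ ?_
  · rw [X_pow_dvd_iff] at this
    simpa using this n (by omega)
  · have : (derivative ℝ) ((egf fun n => H n x) - egf (fun n => x ^ n) * egf (fun n => H n 0)) -
        (C x - X) * ((egf fun n => H n x) - egf (fun n => x ^ n) * egf (fun n => H n 0)) = 0 := by
      rw [map_sub, Derivation.leibniz, hx, H_ode H hgen, H_ode H hgen]
      simp only [smul_eq_mul, map_zero]
      ring
    rw [this]; exact dvd_zero _
  · rw [map_sub, PowerSeries.coeff_mul]
    simp [coeff_egf, H_zero H hgen]

lemma H_explicit (H : ℕ → ℝ → ℝ)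
    (hgen : ∀ t x : ℝ, HasSum (fun n : ℕ => H n x * t ^ n / (Nat.factorial n))
      (Real.exp (t * x - t ^ 2 / 2)))
    (n : ℕ) (x : ℝ) : H n x =
    ∑ i ∈ Finset.range (n + 1), (n.choose i : ℝ) * x ^ i * H (n - i) 0 := by
  have := congrArg (PowerSeries.coeff n) (H_mul H hgen x)
  rw [coeff_egf_mul, coeff_egf] at this
  have h : (n.factorial : ℝ) ≠ 0 := by positivity
  field_simp at this
  exact this

open PowerSeries in
/-- the combinatorial part -/
lemma exp_part (j : ℕ) (hj : 3 ≤ j) (κ : ℕ → ℝ) (A : PowerSeries ℝ) (h0 : coeff 0 A = 1)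
    (hA : (X : PowerSeries ℝ) ^ j ∣ derivative ℝ A -
      derivative ℝ (∑ r ∈ Finset.Icc 3 j, C (κ r / (r.factorial : ℝ)) * X ^ r) * A) :
    coeff j A * (j.factorial : ℝ) = ∑ k ∈ Finset.Icc 1 (j / 3),
        ∑ r ∈ Fintype.piFinset (fun _ : Fin k => Finset.Icc 3 j),
          if (∑ i, r i) = j then
            (∏ i, κ (r i)) / (∏ i, (Nat.factorial (r i) : ℝ)) *
              ((Nat.factorial j : ℝ) / (Nat.factorial k : ℝ))
          else 0 := by
  set K : PowerSeries ℝ := ∑ r ∈ Finset.Icc 3 j, C (κ r / (r.factorial : ℝ)) * X ^ r with hK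
  have hK3 : (X : PowerSeries ℝ) ^ 3 ∣ K := by
    refine Finset.dvd_sum fun r hr => Dvd.dvd.mul_left (pow_dvd_pow _ (Finset.mem_Icc.mp hr).1) _
  have hdK : (X : PowerSeries ℝ) ^ 2 ∣ derivative ℝ K := by
    obtain ⟨Q, hQ⟩ := hK3
    rw [hQ, Derivation.leibniz, Derivation.leibniz_pow]
    refine dvd_add (Dvd.dvd.mul_right (pow_dvd_pow _ (by norm_num)) _) ?_
    simp only [smul_eq_mul, nsmul_eq_mul]
    exact ⟨Q * (3 * derivative ℝ X), by push_cast; ring⟩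
  let S : ℕ → PowerSeries ℝ := fun N => ∑ k ∈ Finset.range (N + 1), C ((k.factorial : ℝ)⁻¹) * K ^ k
  have hS : ∀ N, derivative ℝ (S N) = derivative ℝ K * (S N - C ((N.factorial : ℝ)⁻¹) * K ^ N) := by
    intro N
    induction N with
    | zero => simp [S]
    | succ N ih =>
      have e : S (N + 1) = S N + C (((N+1).factorial : ℝ)⁻¹) * K ^ (N + 1) := by
        simp only [S]; rw [Finset.sum_range_succ]
      have e2 : (C (((N+1).factorial : ℝ)⁻¹) : PowerSeries ℝ) * ((N + 1 : ℕ) : PowerSeries ℝ)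
          = C ((N.factorial : ℝ)⁻¹) := by
        rw [← map_natCast (C (R := ℝ)), ← map_mul, Nat.factorial_succ]
        congr 1
        have h : (N.factorial : ℝ) ≠ 0 := by positivity
        push_cast
        field_simp
      rw [e, map_add, ih, Derivation.leibniz, Derivation.leibniz_pow, ← e2]
      simp only [smul_eq_mul, nsmul_eq_mul, derivative_C, Nat.add_sub_cancel]
      ring
  have hD : (X : PowerSeries ℝ) ^ (j + 1) ∣ A - S (j / 3) := by
    apply ode_unique (B := derivative ℝ K)
    · have h1 : (X : PowerSeries ℝ) ^ j ∣ derivative ℝ K * (C (((j/3).factorial : ℝ)⁻¹) * K ^ (j / 3)) := by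
        have h2 : (X : PowerSeries ℝ) ^ (2 + 3 * (j / 3)) ∣ derivative ℝ K * K ^ (j / 3) := by
          rw [pow_add, pow_mul]
          exact mul_dvd_mul hdK (pow_dvd_pow_of_dvd hK3 _)
        have h3 := (pow_dvd_pow (X : PowerSeries ℝ) (show j ≤ 2 + 3 * (j / 3) by omega)).trans h2
        convert Dvd.dvd.mul_left h3 (C (((j/3).factorial : ℝ)⁻¹)) using 1
        ring
      have := dvd_add hA h1
      rw [map_sub, hS]
      convert this using 1
      ring
    · rw [map_sub, h0]
      have hK0 : constantCoeff K = 0 := by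
        rw [← PowerSeries.X_dvd_iff]
        exact (dvd_pow_self _ (by norm_num)).trans hK3
      simp only [S, map_sum]
      rw [Finset.sum_range_succ']
      simp [hK0]
  have hc : coeff j A = coeff j (S (j / 3)) := by
    rw [X_pow_dvd_iff] at hD
    have := hD j (by omega)
    rwa [map_sub, sub_eq_zero] at this
  rw [hc]
  simp only [S, map_sum]
  rw [Finset.range_eq_Ico, Finset.sum_eq_sum_Ico_succ_bot (by omega)]
  have hz : coeff j (C (((0:ℕ).factorial : ℝ)⁻¹) * K ^ 0) = 0 := by
    simp [PowerSeries.coeff_one]; try omega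
  rw [hz, zero_add, Finset.sum_mul]
  have : Finset.Ico (0 + 1) (j / 3 + 1) = Finset.Icc 1 (j / 3) := by ext; simp; try omega
  rw [this]
  refine Finset.sum_congr rfl fun k _ => ?_
  have hp : K ^ k = ∑ r ∈ Fintype.piFinset (fun _ : Fin k => Finset.Icc 3 j),
      C (∏ i, (κ (r i) / ((r i).factorial : ℝ))) * X ^ (∑ i, r i) := by
    have : K ^ k = ∏ _i : Fin k, K := by simp
    rw [this, hK, Finset.prod_univ_sum]
    refine Finset.sum_congr rfl fun r _ => ?_
    rw [Finset.prod_mul_distrib, Finset.prod_pow_eq_pow_sum, map_prod]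
  rw [PowerSeries.coeff_C_mul, hp, map_sum, Finset.mul_sum, Finset.sum_mul]
  refine Finset.sum_congr rfl fun r _ => ?_
  rw [PowerSeries.coeff_C_mul, PowerSeries.coeff_X_pow]
  by_cases h : ∑ i, r i = j
  · rw [if_pos h, if_pos h.symm, Finset.prod_div_distrib]
    ring
  · rw [if_neg h, if_neg (Ne.symm h)]
    ring


lemma cumulant_rec {Ω : Type*} [MeasurableSpace Ω] (P : Measure Ω) [IsProbabilityMeasure P]
    (Y : Ω → ℝ) (hYmeas : Measurable Y) (j : ℕ)
    (hL : MemLp Y j P) (κ : ℕ → ℝ)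
    (hκ : ∀ r : ℕ, r ≤ j →
      (κ r : ℂ) = Complex.I ^ (-(r : ℤ)) *
        iteratedDeriv r (fun u : ℝ => Complex.log (∫ ω, Complex.exp (Complex.I * u * Y ω) ∂P)) 0)
    (n : ℕ) (hn : n < j) :
    ∫ ω, Y ω ^ (n + 1) ∂P =
      ∑ i ∈ Finset.range (n + 1), (n.choose i : ℝ) * κ (i + 1) * ∫ ω, Y ω ^ (n - i) ∂P := by
  have : IsProbabilityMeasure (P.map Y) := Measure.isProbabilityMeasure_map hYmeas.aemeasurable
  have hmem : MemLp id j (P.map Y) := by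
    rw [memLp_map_measure_iff (by fun_prop) hYmeas.aemeasurable]
    exact hL
  set φ : ℝ → ℂ := charFun (P.map Y) with hφ
  have hφeq : (fun u : ℝ => Complex.log (∫ ω, Complex.exp (Complex.I * u * Y ω) ∂P)) =
      fun u => Complex.log (φ u) := by
    funext u
    rw [hφ, charFun_apply_real, integral_map hYmeas.aemeasurable (by fun_prop)]
    congr 2
    funext ω
    congr 1
    ring
  rw [hφeq] at hκ
  have hC : ContDiff ℝ j φ := contDiff_charFun hmem
  have hmom : ∀ m ≤ j, iteratedDeriv m φ 0 = I ^ m * ((∫ ω, Y ω ^ m ∂P : ℝ) : ℂ) := by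
    intro m hm
    have hm' : MemLp id m (P.map Y) := hmem.mono_exponent (by exact_mod_cast hm)
    rw [hφ, iteratedDeriv_charFun_zero hm', integral_map hYmeas.aemeasurable (by fun_prop)]
  have h0 : φ 0 = 1 := by simp [hφ]
  have hslit : ∀ᶠ u in nhds (0 : ℝ), φ u ∈ Complex.slitPlane := by
    refine hC.continuous.continuousAt.eventually_mem (Complex.isOpen_slitPlane.mem_nhds ?_)
    rw [h0]; exact Complex.one_mem_slitPlane
  have hj0 : (j : WithTop ℕ∞) ≠ 0 := by
    have : j ≠ 0 := by omega
    exact_mod_cast this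
  have hdiff : Differentiable ℝ φ := hC.differentiable hj0
  have hdC : ContDiff ℝ n (deriv φ) := by
    have h1 : ContDiff ℝ ((n : WithTop ℕ∞) + 1) φ := hC.of_le (by exact_mod_cast hn)
    exact (contDiff_succ_iff_deriv.mp h1).2.2
  have hCn : ContDiffAt ℝ n φ 0 := (hC.of_le (by exact_mod_cast hn.le)).contDiffAt
  have hB : ContDiffAt ℝ n (fun u => deriv φ u / φ u) 0 := by
    simp only [div_eq_mul_inv]
    exact hdC.contDiffAt.mul (hCn.inv (by rw [h0]; exact one_ne_zero))
  have hLd : deriv (fun u => Complex.log (φ u)) =ᶠ[nhds 0] fun u => deriv φ u / φ u := by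
    filter_upwards [hslit] with u hu
    exact ((hdiff u).hasDerivAt.clog_real hu).deriv
  have hrec := logderiv φ (fun u => deriv φ u / φ u) n (by
    filter_upwards [hslit] with u hu
    have := Complex.slitPlane_ne_zero hu
    simp only [Pi.mul_apply]
    field_simp) (hC.of_le (by exact_mod_cast hn.le)).contDiffAt hB
  have hBi : ∀ i ≤ n, iteratedDeriv i (fun u => deriv φ u / φ u) 0 = I ^ (i + 1) * (κ (i + 1) : ℂ) := by
    intro i hi
    rw [← hLd.iteratedDeriv_eq i, ← iteratedDeriv_succ', hκ (i + 1) (by omega), ← mul_assoc,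
      zpow_neg, zpow_natCast, mul_inv_cancel₀ (pow_ne_zero _ I_ne_zero), one_mul]
  rw [hmom (n + 1) (by omega)] at hrec
  have hI : (I : ℂ) ^ (n + 1) ≠ 0 := pow_ne_zero _ I_ne_zero
  have : (I : ℂ) ^ (n + 1) * ((∫ ω, Y ω ^ (n + 1) ∂P : ℝ) : ℂ) = I ^ (n + 1) *
      ((∑ i ∈ Finset.range (n + 1), (n.choose i : ℝ) * κ (i + 1) * ∫ ω, Y ω ^ (n - i) ∂P : ℝ) : ℂ) := by
    rw [hrec, Complex.ofReal_sum, Finset.mul_sum]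
    refine Finset.sum_congr rfl fun i hi => ?_
    have hi' : i ≤ n := by simpa [Nat.lt_succ_iff] using hi
    rw [hBi i hi', hmom (n - i) (by omega)]
    have : (I : ℂ) ^ (n + 1) = I ^ (i + 1) * I ^ (n - i) := by
      rw [← pow_add]; congr 1; omega
    rw [this]
    push_cast
    ring
  exact_mod_cast mul_left_cancel₀ hI this

end HermiteAux

/-- **Moments of Hermite polynomials in terms of cumulants.**
For a real random variable `Y` with mean `0`, variance `1` and finite `j`-th moment (`j ≥ 3`),
where `H` are the probabilists' Hermite polynomials (generating function
`e^{tx - t²/2} = Σ_j H_j(x) t^j/j!`) and `κ r` is the `r`-th cumulant of `Y`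
(`κ_r = i^{-r} (d^r/du^r) log E[e^{iuY}]` at `u = 0`), one has
`E[H_j(Y)] = Σ_{k=1}^{⌊j/3⌋} Σ_{r_1+...+r_k=j, r_i ≥ 3} (κ_{r_1}⋯κ_{r_k})/(r_1!⋯r_k!) · j!/k!`.
In particular `E[H_0(Y)] = 1` and `E[H_1(Y)] = E[H_2(Y)] = 0`. -/
theorem hermite_moment_cumulant_formula
    {Ω : Type*} [MeasurableSpace Ω] (P : Measure Ω) [IsProbabilityMeasure P]
    (Y : Ω → ℝ) (hYmeas : Measurable Y)
    (j : ℕ) (hj : 3 ≤ j)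
    (hmom : Integrable (fun ω => |Y ω| ^ j) P)
    (hmean : ∫ ω, Y ω ∂P = 0) (hvar : ∫ ω, (Y ω) ^ 2 ∂P = 1)
    (H : ℕ → ℝ → ℝ)
    (hgen : ∀ t x : ℝ, HasSum (fun n : ℕ => H n x * t ^ n / (Nat.factorial n))
      (Real.exp (t * x - t ^ 2 / 2)))
    (κ : ℕ → ℝ)
    (hκ : ∀ r : ℕ, r ≤ j →
      (κ r : ℂ) = Complex.I ^ (-(r : ℤ)) *
        iteratedDeriv r (fun u : ℝ => Complex.log (∫ ω, Complex.exp (Complex.I * u * Y ω) ∂P)) 0) :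
    (∫ ω, H j (Y ω) ∂P =
      ∑ k ∈ Finset.Icc 1 (j / 3),
        ∑ r ∈ Fintype.piFinset (fun _ : Fin k => Finset.Icc 3 j),
          if (∑ i, r i) = j then
            (∏ i, κ (r i)) / (∏ i, (Nat.factorial (r i) : ℝ)) *
              ((Nat.factorial j : ℝ) / (Nat.factorial k : ℝ))
          else 0) ∧
    (∫ ω, H 0 (Y ω) ∂P = 1) ∧ (∫ ω, H 1 (Y ω) ∂P = 0) ∧ (∫ ω, H 2 (Y ω) ∂P = 0) := by
  have hYj : MemLp Y j P := by
    rw [← integrable_norm_rpow_iff hYmeas.aestronglyMeasurable (by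
      have : j ≠ 0 := by omega
      exact_mod_cast this) (by simp)]
    simpa using hmom
  have hint : ∀ n ≤ j, Integrable (fun ω => Y ω ^ n) P := by
    intro n hn
    have h1 : MemLp Y n P := hYj.mono_exponent (by exact_mod_cast hn)
    refine (h1.integrable_norm_pow').mono' (by fun_prop) (Filter.Eventually.of_forall fun ω => ?_)
    simp
  have hEH : ∀ n ≤ j, ∫ ω, H n (Y ω) ∂P =
      ∑ i ∈ Finset.range (n + 1), (n.choose i : ℝ) * (∫ ω, Y ω ^ i ∂P) * H (n - i) 0 := by
    intro n hn
    have : (fun ω => H n (Y ω)) = fun ω =>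
        ∑ i ∈ Finset.range (n + 1), (n.choose i : ℝ) * Y ω ^ i * H (n - i) 0 := by
      funext ω; exact HermiteAux.H_explicit H hgen n _
    rw [this, integral_finsetSum]
    · refine Finset.sum_congr rfl fun i _ => ?_
      rw [integral_mul_const, integral_const_mul]
    · intro i hi
      have hi' : i ≤ n := by simpa [Nat.lt_succ_iff] using hi
      exact ((hint i (by omega)).const_mul _).mul_const _
  have hrec := HermiteAux.cumulant_rec P Y hYmeas j hYj κ hκ
  have hκ1 : κ 1 = 0 := by
    have := hrec 0 (by omega)
    simpa [hmean] using this.symm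
  have hκ2 : κ 2 = 1 := by
    have := hrec 1 (by omega)
    simpa [hvar, hmean, hκ1, Finset.sum_range_succ] using this.symm
  set M := HermiteAux.egf (fun n => ∫ ω, Y ω ^ n ∂P) with hM
  set G := HermiteAux.egf (fun n => H n 0) with hG
  have hcoef : ∀ n ≤ j, ∫ ω, H n (Y ω) ∂P = PowerSeries.coeff n (M * G) * (n.factorial : ℝ) := by
    intro n hn
    rw [hM, hG, HermiteAux.coeff_egf_mul, hEH n hn, div_mul_cancel₀ _ (by positivity)]
  have hMode := HermiteAux.egf_ode (j := j) (fun n => ∫ ω, Y ω ^ n ∂P) (fun n => κ (n + 1)) hrec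
  rw [← hM] at hMode
  have hGode := HermiteAux.H_ode H hgen 0
  rw [← hG] at hGode
  have hcoef0 : PowerSeries.coeff 0 (M * G) = 1 := by
    rw [hM, hG, HermiteAux.coeff_egf_mul]
    simp [HermiteAux.H_zero H hgen]
  have hKd : (PowerSeries.X : PowerSeries ℝ) ^ j ∣ (HermiteAux.egf (fun n => κ (n + 1)) - PowerSeries.X) -
      PowerSeries.derivative ℝ (∑ r ∈ Finset.Icc 3 j,
        PowerSeries.C (κ r / (r.factorial : ℝ)) * PowerSeries.X ^ r) := by
    rw [PowerSeries.X_pow_dvd_iff]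
    intro n hn
    rw [map_sub, map_sub, ← HermiteAux.egf_derivative, PowerSeries.coeff_derivative,
      PowerSeries.coeff_derivative, HermiteAux.coeff_egf, map_sum]
    simp only [PowerSeries.coeff_C_mul, PowerSeries.coeff_X_pow, mul_ite, mul_one, mul_zero,
      Finset.sum_ite_eq, Finset.mem_Icc]
    rcases n with _ | _ | n
    · simp [hκ1]
    · norm_num [hκ2, PowerSeries.coeff_X]
    · rw [if_pos (by omega), PowerSeries.coeff_X, if_neg (by omega)]
      ring
  have hAode : (PowerSeries.X : PowerSeries ℝ) ^ j ∣ PowerSeries.derivative ℝ (M * G) -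
      PowerSeries.derivative ℝ (∑ r ∈ Finset.Icc 3 j,
        PowerSeries.C (κ r / (r.factorial : ℝ)) * PowerSeries.X ^ r) * (M * G) := by
    have h1 := dvd_add (Dvd.dvd.mul_left hMode G) (Dvd.dvd.mul_left hKd (M * G))
    rw [Derivation.leibniz, hGode]
    simp only [smul_eq_mul, map_zero]
    convert h1 using 1
    ring
  refine ⟨?_, ?_, ?_, ?_⟩
  · rw [hcoef j le_rfl]
    exact HermiteAux.exp_part j hj κ (M * G) hcoef0 hAode
  · rw [hcoef 0 (by omega), hcoef0]; simp
  · have h10 : H 1 0 = 0 := by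
      have := congrArg (PowerSeries.coeff 0) hGode
      rw [hG, HermiteAux.egf_derivative, HermiteAux.coeff_egf] at this
      simpa using this
    rw [hEH 1 (by omega)]
    simp [Finset.sum_range_succ, hmean, h10]
  · have h20 : H 2 0 = -1 := by
      have := congrArg (PowerSeries.coeff 1) hGode
      rw [hG, HermiteAux.egf_derivative] at this
      rw [map_zero, zero_sub, neg_mul, map_neg] at this
      rw [show (1 : ℕ) = 0 + 1 from rfl, PowerSeries.coeff_succ_X_mul, HermiteAux.coeff_egf,
        HermiteAux.coeff_egf, HermiteAux.H_zero H hgen] at this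
      simpa using this
    rw [hEH 2 (by omega)]
    simp [Finset.sum_range_succ, hmean, hvar, HermiteAux.H_zero H hgen, h20]
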